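/- Let n < m be positive integers and let h = (h_1,…,h_n) be any hash sequence of length m and size n. Then: (i) 0 ≤ d(h) ≤ n(n−1)/2; and (ii) for every permutation σ of {1,…,n}, the total displacement of the hash sequence (h_{σ(1)},…,h_{σ(n)}) equals the total displacement of (h_1,…,h_n). -/

import Mathlib

open scoped Classical

/-- Displacement of a ball with hash address `a` when the set `occ` of urns is occupied:
the least `k` such that urn `a + k` (cyclically) is free. -/
noncomputable def hashStep (m : ℕ) (occ : Finset (ZMod m)) (a : ZMod m) : ℕ :=
  if hex : ∃ k : ℕ, a + (k : ZMod m) ∉ occ then Nat.find hex else 0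

/-- One insertion step: updates the occupied set and the accumulated total displacement. -/
noncomputable def hashFoldStep (m : ℕ) (p : Finset (ZMod m) × ℕ) (a : ZMod m) :
    Finset (ZMod m) × ℕ :=
  (insert (a + (hashStep m p.1 a : ZMod m)) p.1, p.2 + hashStep m p.1 a)

/-- Total displacement of a list of hash addresses (processed sequentially). -/
noncomputable def totalDispList (m : ℕ) (l : List (ZMod m)) : ℕ :=
  (l.foldl (hashFoldStep m) (∅, 0)).2

/-- Total displacement `d(h)` of a hash sequence `h` of length `m` and size `n`. -/
noncomputable def totalDisp (m n : ℕ) (h : Fin n → Fin m) : ℕ :=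
  totalDispList m ((List.ofFn h).map (fun x => ((x : ℕ) : ZMod m)))

/-- `P(d_{m,n} ≥ a)` where the hash sequence is uniform on `{1,…,m}^n`. -/
noncomputable def dProbGe (m n : ℕ) (a : ℝ) : ℝ :=
  ((Finset.univ.filter (fun h : Fin n → Fin m => a ≤ (totalDisp m n h : ℝ))).card : ℝ)
    / (m : ℝ) ^ n

theorem hashStep_eq_of_forall_lt_mem {m : ℕ} {occ : Finset (ZMod m)} {a : ZMod m} {k : ℕ}
    (hk : a + (k : ZMod m) ∉ occ) (hlt : ∀ i < k, a + (i : ZMod m) ∈ occ) :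
    hashStep m occ a = k := by
  have hex : ∃ k : ℕ, a + (k : ZMod m) ∉ occ := ⟨k, hk⟩
  rw [hashStep, dif_pos hex, Nat.find_eq_iff]
  exact ⟨hk, fun i hi => not_not.2 (hlt i hi)⟩

theorem mem_of_lt_hashStep {m : ℕ} {occ : Finset (ZMod m)} {a : ZMod m} {i : ℕ}
    (hi : i < hashStep m occ a) : a + (i : ZMod m) ∈ occ := by
  unfold hashStep at hi
  split_ifs at hi with hex
  · exact not_not.1 (Nat.find_min hex hi)
  · omega

theorem add_hashStep_notMem {m : ℕ} [NeZero m] {occ : Finset (ZMod m)} (hocc : occ.card < m)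
    (a : ZMod m) : a + (hashStep m occ a : ZMod m) ∉ occ := by
  have hex : ∃ k : ℕ, a + (k : ZMod m) ∉ occ := by
    obtain ⟨c, hc⟩ : ∃ c, c ∉ occ := by
      by_contra! hall
      rw [Finset.eq_univ_of_forall hall, Finset.card_univ, ZMod.card] at hocc
      exact lt_irrefl _ hocc
    exact ⟨(c - a).val, by simpa using hc⟩
  rw [hashStep, dif_pos hex]
  exact Nat.find_spec hex

/-- A ball is displaced by at most the number of occupied urns. -/
theorem hashStep_le_card {m : ℕ} [NeZero m] (occ : Finset (ZMod m)) (a : ZMod m) :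
    hashStep m occ a ≤ occ.card := by
  by_contra! hlt
  have hm : occ.card < m := by
    by_contra! hfull
    have huniv : occ = Finset.univ := by
      rw [← Finset.card_eq_iff_eq_univ, ZMod.card]
      exact le_antisymm (by simpa [ZMod.card] using occ.card_le_univ) hfull
    simp [hashStep, huniv] at hlt
  have hcard : (Finset.range (occ.card + 1)).card ≤ occ.card := by
    refine Finset.card_le_card_of_injOn (fun i : ℕ => a + (i : ZMod m))
      (fun i hi => mem_of_lt_hashStep ?_) (fun i hi j hj hij => ?_)
    · have := Finset.mem_range.1 hi
      omega
    · have hi' := Finset.mem_range.1 hi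
      have hj' := Finset.mem_range.1 hj
      have hval := congrArg ZMod.val (add_left_cancel hij)
      rwa [ZMod.val_natCast_of_lt (by omega), ZMod.val_natCast_of_lt (by omega)] at hval
  simp at hcard

/-- Occupying an urn other than the landing urn of `a` does not change the displacement of `a`. -/
theorem hashStep_insert_of_ne {m : ℕ} [NeZero m] {occ : Finset (ZMod m)} (hocc : occ.card < m)
    {a x : ZMod m} (hx : a + (hashStep m occ a : ZMod m) ≠ x) :
    hashStep m (insert x occ) a = hashStep m occ a :=
  hashStep_eq_of_forall_lt_mem (by simp [hx, add_hashStep_notMem hocc a])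
    fun _ hi => Finset.mem_insert_of_mem (mem_of_lt_hashStep hi)

/-- Once the landing urn `x` of `a` is occupied, a ball sent to `a` moves to `x` and then continues
as a ball sent to `x`. -/
theorem hashStep_insert_of_eq {m : ℕ} [NeZero m] {occ : Finset (ZMod m)} {a x : ZMod m}
    (hocc : (insert x occ).card < m) (hx : a + (hashStep m occ a : ZMod m) = x) :
    hashStep m (insert x occ) a = hashStep m occ a + hashStep m (insert x occ) x := by
  refine hashStep_eq_of_forall_lt_mem ?_ fun i hi => ?_
  · rw [Nat.cast_add, ← add_assoc, hx]
    exact add_hashStep_notMem hocc x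
  · rcases lt_or_ge i (hashStep m occ a) with hlt | hge
    · exact Finset.mem_insert_of_mem (mem_of_lt_hashStep hlt)
    · obtain ⟨j, rfl⟩ := Nat.exists_eq_add_of_le hge
      rw [Nat.cast_add, ← add_assoc, hx]
      exact mem_of_lt_hashStep (by omega)

theorem card_hashFoldStep_le (m : ℕ) (p : Finset (ZMod m) × ℕ) (a : ZMod m) :
    (hashFoldStep m p a).1.card ≤ p.1.card + 1 :=
  Finset.card_insert_le _ _

/-- Two consecutive insertions commute when at least two urns are free. -/
theorem hashFoldStep_comm {m : ℕ} [NeZero m] {p : Finset (ZMod m) × ℕ}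
    (hp : p.1.card + 2 ≤ m) (a b : ZMod m) :
    hashFoldStep m (hashFoldStep m p a) b = hashFoldStep m (hashFoldStep m p b) a := by
  obtain ⟨occ, d⟩ := p
  have hocc : occ.card < m := by simp only at hp; omega
  simp only [hashFoldStep]
  by_cases hab : a + (hashStep m occ a : ZMod m) = b + (hashStep m occ b : ZMod m)
  · obtain ⟨x, hx⟩ : ∃ x, b + (hashStep m occ b : ZMod m) = x := ⟨_, rfl⟩
    rw [hx] at hab
    have hins : (insert x occ).card < m := by
      have := Finset.card_insert_le x occ
      simp only at hp
      omega
    rw [hab, hx, hashStep_insert_of_eq hins hab, hashStep_insert_of_eq hins hx, Nat.cast_add,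
      Nat.cast_add, ← add_assoc a, ← add_assoc b, hab, hx]
    congr 1
    ring
  · rw [hashStep_insert_of_ne hocc hab, hashStep_insert_of_ne hocc (Ne.symm hab),
      Finset.insert_comm]
    congr 1
    ring

theorem foldl_hashFoldStep_perm {m : ℕ} [NeZero m] {l₁ l₂ : List (ZMod m)} (hl : l₁.Perm l₂) :
    ∀ p : Finset (ZMod m) × ℕ, p.1.card + l₁.length ≤ m →
      l₁.foldl (hashFoldStep m) p = l₂.foldl (hashFoldStep m) p := by
  induction hl with
  | nil => simp
  | cons a _ ih =>
    intro p hp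
    have := card_hashFoldStep_le m p a
    rw [List.length_cons] at hp
    exact ih _ (by omega)
  | swap a b l =>
    intro p hp
    simp only [List.length_cons] at hp
    simp only [List.foldl_cons]
    rw [hashFoldStep_comm (by omega)]
  | trans h₁ _ ih₁ ih₂ =>
    intro p hp
    exact (ih₁ p hp).trans (ih₂ p (h₁.length_eq ▸ hp))

theorem two_mul_foldl_hashFoldStep_add_length_le {m : ℕ} [NeZero m] (l : List (ZMod m)) :
    ∀ p : Finset (ZMod m) × ℕ, 2 * (l.foldl (hashFoldStep m) p).2 + l.length ≤
      2 * p.2 + l.length * (2 * p.1.card + l.length) := by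
  induction l with
  | nil => simp
  | cons a l ih =>
    intro p
    have hfold := ih (hashFoldStep m p a)
    have hcard := card_hashFoldStep_le m p a
    have hdisp : (hashFoldStep m p a).2 ≤ p.2 + p.1.card :=
      Nat.add_le_add_left (hashStep_le_card p.1 a) _
    have hmul := Nat.mul_le_mul_left l.length hcard
    rw [List.foldl_cons, List.length_cons]
    nlinarith

theorem totalDisp_eq_totalDispList_ofFn (m n : ℕ) (h : Fin n → Fin m) :
    totalDisp m n h = totalDispList m ((List.ofFn h).map fun x : Fin m => ((x : ℕ) : ZMod m)) := by
  simp [totalDisp, ← List.map_eq_flatMap, Function.comp_def]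

/-- **Basic properties of the total displacement** (Lemma on hashing):
for `n < m` and any hash sequence `h` of length `m` and size `n`,
(i) `0 ≤ d(h) ≤ n(n-1)/2`, and (ii) `d` is invariant under permutations of the sequence. -/
theorem totalDisp_le_and_perm_invariant (m n : ℕ) (hn : 0 < n) (hlt : n < m)
    (h : Fin n → Fin m) :
    ((0 : ℝ) ≤ (totalDisp m n h : ℝ) ∧
      (totalDisp m n h : ℝ) ≤ (n : ℝ) * ((n : ℝ) - 1) / 2) ∧
    ∀ σ : Equiv.Perm (Fin n), totalDisp m n (h ∘ σ) = totalDisp m n h := by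
  have : NeZero m := ⟨by omega⟩
  refine ⟨⟨Nat.cast_nonneg _, ?_⟩, fun σ => ?_⟩
  · have hbound : 2 * totalDisp m n h + n ≤ n * n := by
      rw [totalDisp_eq_totalDispList_ofFn]
      have hfold := two_mul_foldl_hashFoldStep_add_length_le
        ((List.ofFn h).map fun x : Fin m => ((x : ℕ) : ZMod m)) (∅, 0)
      rw [List.length_map, List.length_ofFn] at hfold
      simpa only [totalDispList, Finset.card_empty, mul_zero, zero_add] using hfold
    have hreal : 2 * (totalDisp m n h : ℝ) + n ≤ n * n := by exact_mod_cast hbound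
    linarith
  · have hperm := (Equiv.Perm.ofFn_comp_perm σ h).map fun x : Fin m => ((x : ℕ) : ZMod m)
    rw [totalDisp_eq_totalDispList_ofFn, totalDisp_eq_totalDispList_ofFn]
    exact congrArg Prod.snd (foldl_hashFoldStep_perm hperm (∅, 0) (by simpa using hlt.le))
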